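/- Let n > 2m ≥ 2 and k₁ ≥ 0 be integers, and let ε > 0 and η be reals with η + k₁ + 1 > 2m and 0 < η + 1 < n. For x, y ∈ ℝⁿ define K(x,y) := ∫_{ℝⁿ} ∫_{ℝⁿ} ⟨z₁⟩^{-n−ε} ⟨z₂⟩^{-n−ε} · 𝟙_{\{|z₂−y| ≥ 2|x−z₁|, |x−z₁| ≥ 1\}} · |x−z₁|^{-(n−2m+k₁)} |z₂−y|^{-η−1} dz₁ dz₂. Then for every p with 1 ≤ p < n/(n−η−1), the integral operator f ↦ ∫_{ℝⁿ} K(·,y) f(y) dy is bounded on L^p(ℝⁿ). -/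

import Mathlib

/-!
Put `a = n - 2m + k₁` and `b = η + 1`. The hypotheses say `a + b > n` and `p (n - b) < n`, so
there is `σ ≥ 0` with `n/p - a < σ < b - n (1 - 1/p)`. On the support of the indicator both
`|x - z₁|` and `|z₂ - y|` are at least `1` and `|z₂ - y| ≥ |x - z₁|`, so part of the decay in
`z₂ - y` can be transferred to `x - z₁`:
`|x - z₁|^{-a} |z₂ - y|^{-b} ≲ (1 + |x - z₁|)^{-(a+σ)} (1 + |z₂ - y|)^{-(b-σ)}`.
Hence `K x y ≲ G x * H y`, where `G` and `H` are convolutions of an integrable weight with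
`(1 + |·|)^{-(a+σ)}` and `(1 + |·|)^{-(b-σ)}` (`kernel_le`). By the choice of `σ` these two powers
lie in `L^p` and `L^{p'}`, and convolution with an integrable weight preserves this
(`lintegral_conv_rpow_lt_top`). Hölder's inequality then bounds the rank-one operator with
kernel `G x * H y` on `L^p`.
-/

open MeasureTheory ENNReal

/-- The weight `(1 + |v|)^{-r}`, with values in `ℝ≥0∞`. -/
noncomputable def decay {n : ℕ} (r : ℝ) (v : EuclideanSpace ℝ (Fin n)) : ℝ≥0∞ :=
  ENNReal.ofReal ((1 + ‖v‖) ^ (-r))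

lemma measurable_decay {n : ℕ} (r : ℝ) :
    Measurable (decay r : EuclideanSpace ℝ (Fin n) → ℝ≥0∞) := by
  unfold decay
  fun_prop

lemma decay_ne_top {n : ℕ} (r : ℝ) (v : EuclideanSpace ℝ (Fin n)) : decay r v ≠ ⊤ :=
  ENNReal.ofReal_ne_top

lemma decay_le_one {n : ℕ} {r : ℝ} (hr : 0 ≤ r) (v : EuclideanSpace ℝ (Fin n)) :
    decay r v ≤ 1 := by
  unfold decay
  rw [ENNReal.ofReal_le_one]
  exact Real.rpow_le_one_of_one_le_of_nonpos (by linarith [norm_nonneg v]) (by linarith)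

lemma decay_rpow {n : ℕ} (r : ℝ) {q : ℝ} (hq : 0 ≤ q) (v : EuclideanSpace ℝ (Fin n)) :
    decay r v ^ q = decay (r * q) v := by
  unfold decay
  have h : 0 ≤ 1 + ‖v‖ := by positivity
  rw [ENNReal.ofReal_rpow_of_nonneg (by positivity) hq, ← Real.rpow_mul h, neg_mul]

lemma lintegral_decay_lt_top {n : ℕ} {r : ℝ} (hr : (n : ℝ) < r) :
    ∫⁻ v : EuclideanSpace ℝ (Fin n), decay r v < ⊤ :=
  finite_integral_one_add_norm (by simpa using hr)

/-- Convolution with the weight `decay N`, `N > n`, keeps `decay s` in `L^q` for `q ≥ 1`,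
`s q > n`: Jensen's inequality for the finite measure with density `decay N`, then Tonelli. -/
lemma lintegral_conv_rpow_lt_top {n : ℕ} {N s q : ℝ} (hN : (n : ℝ) < N) (hq : 1 ≤ q)
    (hs : (n : ℝ) < s * q) :
    ∫⁻ x : EuclideanSpace ℝ (Fin n), (∫⁻ z, decay N z * decay s (x - z)) ^ q < ⊤ := by
  have hq0 : 0 < q := by linarith
  set W : ℝ≥0∞ := ∫⁻ v : EuclideanSpace ℝ (Fin n), decay N v with hW
  have hWt : W < ⊤ := lintegral_decay_lt_top hN
  have mN := measurable_decay (n := n) N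
  have ms := measurable_decay (n := n) s
  have jensen : ∀ x : EuclideanSpace ℝ (Fin n), (∫⁻ z, decay N z * decay s (x - z)) ^ q ≤
      (∫⁻ z, decay N z * decay (s * q) (x - z)) * (W ^ (1 - 1 / q)) ^ q := by
    intro x
    have mx : Measurable fun z : EuclideanSpace ℝ (Fin n) => decay s (x - z) :=
      ms.comp (measurable_const.sub measurable_id)
    have h := eLpNorm'_le_eLpNorm'_mul_rpow_measure_univ
      (μ := (volume : Measure (EuclideanSpace ℝ (Fin n))).withDensity (decay N))
      (f := fun z => decay s (x - z)) one_pos hq mx.aestronglyMeasurable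
    simp only [eLpNorm', enorm_eq_self, ENNReal.rpow_one, div_one] at h
    rw [lintegral_withDensity_eq_lintegral_mul _ mN mx,
      lintegral_withDensity_eq_lintegral_mul _ mN (mx.pow_const q),
      withDensity_apply _ MeasurableSet.univ, Measure.restrict_univ] at h
    simp only [Pi.mul_apply, decay_rpow s hq0.le] at h
    calc _ ≤ _ := ENNReal.rpow_le_rpow h hq0.le
      _ = _ := by
        rw [ENNReal.mul_rpow_of_nonneg _ _ hq0.le, ← ENNReal.rpow_mul, one_div_mul_cancel hq0.ne',
          ENNReal.rpow_one]
  have hc : (W ^ (1 - 1 / q)) ^ q < ⊤ := by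
    have : 1 / q ≤ 1 := by rw [div_le_one hq0]; exact hq
    exact ENNReal.rpow_lt_top_of_nonneg hq0.le
      (ENNReal.rpow_lt_top_of_nonneg (by linarith) hWt.ne).ne
  have msq := measurable_decay (n := n) (s * q)
  have m2 : Measurable fun w : EuclideanSpace ℝ (Fin n) × EuclideanSpace ℝ (Fin n) =>
      decay N w.2 * decay (s * q) (w.1 - w.2) :=
    (mN.comp measurable_snd).mul (msq.comp (measurable_fst.sub measurable_snd))
  refine (lintegral_mono jensen).trans_lt ?_
  rw [lintegral_mul_const _ m2.lintegral_prod_right', lintegral_lintegral_swap m2.aemeasurable]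
  have inner : ∀ z : EuclideanSpace ℝ (Fin n), ∫⁻ x, decay N z * decay (s * q) (x - z) =
      decay N z * ∫⁻ x : EuclideanSpace ℝ (Fin n), decay (s * q) x := by
    intro z
    rw [lintegral_const_mul' _ _ (decay_ne_top N z),
      lintegral_sub_right_eq_self (fun x => decay (s * q) x) z]
  simp_rw [inner]
  rw [lintegral_mul_const _ mN]
  exact ENNReal.mul_lt_top (ENNReal.mul_lt_top hWt (lintegral_decay_lt_top hs)) hc

lemma rpow_neg_le_one_add {t r : ℝ} (ht : 1 ≤ t) (hr : 0 ≤ r) :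
    t ^ (-r) ≤ 2 ^ r * (1 + t) ^ (-r) := by
  have h0 : (0 : ℝ) < t := by linarith
  have h : (1 + t) / 2 ≤ t := by linarith
  calc t ^ (-r) ≤ ((1 + t) / 2) ^ (-r) :=
        Real.rpow_le_rpow_of_nonpos (by positivity) h (by linarith)
    _ = 2 ^ r * (1 + t) ^ (-r) := by
        rw [Real.div_rpow (by positivity) (by norm_num), Real.rpow_neg (by norm_num : (0:ℝ) ≤ 2)]
        field_simp

/-- For `1 ≤ t ≤ u`, decay of order `σ` can be moved from the larger variable to the smaller. -/
lemma rpow_mul_rpow_le {t u a b σ : ℝ} (ht : 1 ≤ t) (htu : t ≤ u) (ha : 0 ≤ a) (hb : 0 ≤ b)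
    (hσ : 0 ≤ σ) :
    t ^ (-a) * u ^ (-b) ≤ 2 ^ (a + b) * ((1 + t) ^ (-(a + σ)) * (1 + u) ^ (-(b - σ))) := by
  have ht' : 0 < 1 + t := by linarith
  have hu' : 0 < 1 + u := by linarith
  have h1 := rpow_neg_le_one_add ht ha
  have h2 := rpow_neg_le_one_add (ht.trans htu) hb
  have h3 : (1 + u) ^ (-σ) ≤ (1 + t) ^ (-σ) :=
    Real.rpow_le_rpow_of_nonpos ht' (by linarith) (by linarith)
  have h4 : (1 + u) ^ (-b) ≤ (1 + t) ^ (-σ) * (1 + u) ^ (-(b - σ)) := by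
    rw [show -b = -σ + -(b - σ) by ring, Real.rpow_add hu']
    gcongr
  have hu0 : 0 ≤ u := by linarith
  calc t ^ (-a) * u ^ (-b)
      ≤ (2 ^ a * (1 + t) ^ (-a)) * (2 ^ b * ((1 + t) ^ (-σ) * (1 + u) ^ (-(b - σ)))) := by
        refine mul_le_mul h1 (h2.trans ?_) (by positivity) (by positivity)
        gcongr
    _ = _ := by
        rw [show -(a + σ) = -a + -σ by ring, Real.rpow_add ht', Real.rpow_add (by norm_num)]
        ring

lemma japanese_le_decay {n : ℕ} {N : ℝ} (hN : 0 < N) (z : EuclideanSpace ℝ (Fin n)) :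
    ENNReal.ofReal (Real.sqrt (1 + ‖z‖ ^ 2) ^ (-N)) ≤
      ENNReal.ofReal (2 ^ (N / 2)) * decay N z := by
  unfold decay
  rw [← ENNReal.ofReal_mul (by positivity)]
  apply ENNReal.ofReal_le_ofReal
  have h := rpow_neg_one_add_norm_sq_le z hN
  rwa [Real.sqrt_eq_rpow, ← Real.rpow_mul (by positivity), show 1 / 2 * -N = -N / 2 by ring]

/-- The kernel is dominated by a constant times a product of a function of `x` and a function
of `y`, with decay of order `σ` transferred from `y` to `x`. -/
lemma kernel_le {n : ℕ} {N a b σ : ℝ} (hN : 0 < N) (ha : 0 ≤ a) (hb : 0 ≤ b) (hσ : 0 ≤ σ) :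
    ∃ C : ℝ≥0∞, C ≠ ⊤ ∧ ∀ x y : EuclideanSpace ℝ (Fin n),
      (∫⁻ z₁ : EuclideanSpace ℝ (Fin n), ∫⁻ z₂ : EuclideanSpace ℝ (Fin n),
        ENNReal.ofReal (Real.sqrt (1 + ‖z₁‖ ^ 2) ^ (-N)) *
        ENNReal.ofReal (Real.sqrt (1 + ‖z₂‖ ^ 2) ^ (-N)) *
        (if 2 * ‖x - z₁‖ ≤ ‖z₂ - y‖ ∧ 1 ≤ ‖x - z₁‖ then 1 else 0) *
        ENNReal.ofReal (‖x - z₁‖ ^ (-a)) *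
        ENNReal.ofReal (‖z₂ - y‖ ^ (-b))) ≤
      C * (∫⁻ z, decay N z * decay (a + σ) (x - z)) *
        (∫⁻ z, decay N z * decay (b - σ) (y - z)) := by
  set A : ℝ≥0∞ := ENNReal.ofReal (2 ^ (N / 2)) with hA
  set B : ℝ≥0∞ := ENNReal.ofReal (2 ^ (a + b)) with hB
  have mN := measurable_decay (n := n) N
  have msub : ∀ (r : ℝ) (x : EuclideanSpace ℝ (Fin n)), Measurable fun z => decay r (x - z) :=
    fun r x => (measurable_decay r).comp (measurable_const.sub measurable_id)
  refine ⟨A * A * B, by finiteness, fun x y => ?_⟩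
  calc _ ≤ ∫⁻ z₁ : EuclideanSpace ℝ (Fin n), ∫⁻ z₂ : EuclideanSpace ℝ (Fin n),
        (A * A * B * (decay N z₁ * decay (a + σ) (x - z₁))) *
          (decay N z₂ * decay (b - σ) (y - z₂)) := by
        refine lintegral_mono fun z₁ => lintegral_mono fun z₂ => ?_
        dsimp only
        split_ifs with h
        · have h1 := japanese_le_decay hN z₁
          have h2 := japanese_le_decay hN z₂
          have h3 : ENNReal.ofReal (‖x - z₁‖ ^ (-a)) * ENNReal.ofReal (‖z₂ - y‖ ^ (-b)) ≤
              B * (decay (a + σ) (x - z₁) * decay (b - σ) (y - z₂)) := by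
            unfold decay
            rw [norm_sub_rev y z₂, ← ENNReal.ofReal_mul (by positivity),
              ← ENNReal.ofReal_mul (by positivity), hB, ← ENNReal.ofReal_mul (by positivity)]
            exact ENNReal.ofReal_le_ofReal
              (rpow_mul_rpow_le h.2 (by linarith [h.1, h.2]) ha hb hσ)
          rw [mul_one, mul_assoc]
          refine (mul_le_mul' (mul_le_mul' h1 h2) h3).trans_eq ?_
          ring
        · simp
    _ = _ := by
        have mprod : ∀ (r : ℝ) (x : EuclideanSpace ℝ (Fin n)),
            Measurable fun z => decay N z * decay r (x - z) := fun r x => mN.mul (msub r x)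
        simp_rw [fun c : ℝ≥0∞ => lintegral_const_mul (μ := volume) c (mprod (b - σ) y)]
        rw [lintegral_mul_const _ ((mprod _ _).const_mul _), lintegral_const_mul _ (mprod _ _)]

/-- `L^p` boundedness, for `1 ≤ p < n/(n−η−1)`, of the positive integral operator with the
kernel arising in the regime `r₂ ≫ r₁ ≫ 1`. -/
theorem stmt_17 (n m k₁ : ℕ) (hm : 1 ≤ m) (hn : 2 * m < n) (ε η : ℝ)
    (hε : 0 < ε) (hcond : 2 * (m : ℝ) < η + k₁ + 1)
    (hη1 : 0 < η + 1) (hη2 : η + 1 < n)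
    (K : EuclideanSpace ℝ (Fin n) → EuclideanSpace ℝ (Fin n) → ℝ≥0∞)
    (hK : ∀ x y, K x y =
      ∫⁻ z₁, ∫⁻ z₂,
        ENNReal.ofReal (Real.sqrt (1 + ‖z₁‖ ^ 2) ^ (-(n : ℝ) - ε)) *
        ENNReal.ofReal (Real.sqrt (1 + ‖z₂‖ ^ 2) ^ (-(n : ℝ) - ε)) *
        (if 2 * ‖x - z₁‖ ≤ ‖z₂ - y‖ ∧ 1 ≤ ‖x - z₁‖ then 1 else 0) *
        ENNReal.ofReal (‖x - z₁‖ ^ (-((n : ℝ) - 2 * m + k₁))) *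
        ENNReal.ofReal (‖z₂ - y‖ ^ (-η - 1))) :
    ∀ p : ℝ, 1 ≤ p → p < (n : ℝ) / ((n : ℝ) - η - 1) →
      ∃ C : ℝ≥0∞, C ≠ ⊤ ∧ ∀ f : EuclideanSpace ℝ (Fin n) → ℝ≥0∞, AEMeasurable f →
        (∫⁻ x, (∫⁻ y, K x y * f y) ^ p) ^ (1 / p) ≤ C * (∫⁻ x, (f x) ^ p) ^ (1 / p) := by
  intro p hp1 hp2
  have hp0 : 0 < p := by linarith
  have hnm : 2 * (m : ℝ) < n := by exact_mod_cast hn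
  have hk0 : (0 : ℝ) ≤ k₁ := Nat.cast_nonneg _
  have hn0 : (0 : ℝ) ≤ n := Nat.cast_nonneg _
  set a : ℝ := (n : ℝ) - 2 * m + k₁ with ha
  set b : ℝ := η + 1 with hb
  have hpb : p * (n - b) < n := by
    rw [lt_div_iff₀ (by linarith)] at hp2
    linarith
  have hpb' : (n : ℝ) - b < n / p := by
    rw [lt_div_iff₀ hp0]; linarith
  -- The lower bound puts `decay (a + σ)` in `L^p`, the upper one `decay (b - σ)` in `L^{p'}`.
  obtain ⟨σ, hσ1, hσ2⟩ : ∃ σ, max 0 (n / p - a) < σ ∧ σ < b - n + n / p :=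
    exists_between (max_lt (by linarith) (by linarith))
  have hσ0 : 0 ≤ σ := (le_max_left _ _).trans hσ1.le
  have hσa : (n : ℝ) / p - a < σ := (le_max_right _ _).trans_lt hσ1
  have hN : (n : ℝ) < n + ε := by linarith
  obtain ⟨C₀, hC₀, hle⟩ := kernel_le (n := n) (N := n + ε) (a := a) (b := b) (σ := σ)
    (by linarith) (by linarith) hη1.le hσ0
  set G : EuclideanSpace ℝ (Fin n) → ℝ≥0∞ :=
    fun x => ∫⁻ z, decay (n + ε) z * decay (a + σ) (x - z) with hG
  set H : EuclideanSpace ℝ (Fin n) → ℝ≥0∞ :=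
    fun x => ∫⁻ z, decay (n + ε) z * decay (b - σ) (x - z) with hH
  have hKle : ∀ x y, K x y ≤ C₀ * G x * H y := by
    intro x y
    rw [hK, show -(n : ℝ) - ε = -(n + ε) by ring, show -η - 1 = -b by rw [hb]; ring]
    exact hle x y
  have mconv : ∀ r s : ℝ, Measurable fun x : EuclideanSpace ℝ (Fin n) =>
      ∫⁻ z, decay r z * decay s (x - z) := fun r s =>
    Measurable.lintegral_prod_right' (f := fun w : EuclideanSpace ℝ (Fin n) ×
        EuclideanSpace ℝ (Fin n) => decay r w.2 * decay s (w.1 - w.2))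
      (((measurable_decay r).comp measurable_snd).mul
        ((measurable_decay s).comp (measurable_fst.sub measurable_snd)))
  have mG : Measurable G := mconv _ _
  have mH : Measurable H := mconv _ _
  have hGp : ∫⁻ x, G x ^ p < ⊤ := by
    refine lintegral_conv_rpow_lt_top hN hp1 ?_
    rw [← div_lt_iff₀ hp0]
    linarith
  -- Hölder's inequality, that is, `H` lies in the dual space `L^{p'}`.
  obtain ⟨D, hD, hHf⟩ : ∃ D : ℝ≥0∞, D ≠ ⊤ ∧ ∀ f : EuclideanSpace ℝ (Fin n) → ℝ≥0∞,
      AEMeasurable f → ∫⁻ y, H y * f y ≤ D * (∫⁻ x, (f x) ^ p) ^ (1 / p) := by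
    rcases hp1.eq_or_lt with rfl | hp1
    · have hbσ : 0 ≤ b - σ := by rw [div_one] at hσ2; linarith
      refine ⟨_, (lintegral_decay_lt_top hN).ne, fun f _ => ?_⟩
      simp only [ENNReal.rpow_one, div_one]
      have hfin : ∫⁻ v : EuclideanSpace ℝ (Fin n), decay (n + ε) v ≠ ⊤ :=
        (lintegral_decay_lt_top hN).ne
      rw [← lintegral_const_mul' _ _ hfin]
      refine lintegral_mono fun y => mul_le_mul_left ?_ _
      refine lintegral_mono fun z => ?_
      exact mul_le_of_le_one_right' (decay_le_one hbσ _)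
    · have hpq : p.HolderConjugate p.conjExponent := Real.HolderConjugate.conjExponent hp1
      set q := p.conjExponent with hq
      have hHq : ∫⁻ x, H x ^ q < ⊤ := by
        refine lintegral_conv_rpow_lt_top hN hpq.symm.lt.le ?_
        rw [← div_lt_iff₀ hpq.symm.pos]
        have h1 : q⁻¹ = 1 - p⁻¹ := by linarith [hpq.inv_add_inv_eq_one]
        rw [div_eq_mul_inv, h1]
        rw [div_eq_mul_inv] at hσ2
        linarith
      refine ⟨(∫⁻ x, H x ^ q) ^ (1 / q), ?_, fun f hf => ?_⟩
      · exact (ENNReal.rpow_lt_top_of_nonneg hpq.symm.one_div_nonneg hHq.ne).ne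
      · exact ENNReal.lintegral_mul_le_Lp_mul_Lq _ hpq.symm mH.aemeasurable hf
  refine ⟨C₀ * D * (∫⁻ x, G x ^ p) ^ (1 / p), ?_, fun f hf => ?_⟩
  · exact ENNReal.mul_ne_top (ENNReal.mul_ne_top hC₀ hD)
      (ENNReal.rpow_lt_top_of_nonneg (by positivity) hGp.ne).ne
  · set F : ℝ≥0∞ := (∫⁻ x, (f x) ^ p) ^ (1 / p) with hF
    have hx : ∀ x, ∫⁻ y, K x y * f y ≤ (C₀ * D * F) * G x := by
      intro x
      calc ∫⁻ y, K x y * f y ≤ ∫⁻ y, (C₀ * G x) * (H y * f y) := by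
            refine lintegral_mono fun y => ?_
            rw [← mul_assoc]
            exact mul_le_mul_left (hKle x y) _
        _ = (C₀ * G x) * ∫⁻ y, H y * f y := lintegral_const_mul'' _ (mH.aemeasurable.mul hf)
        _ ≤ (C₀ * G x) * (D * F) := by gcongr; exact hHf f hf
        _ = _ := by ring
    calc (∫⁻ x, (∫⁻ y, K x y * f y) ^ p) ^ (1 / p)
        ≤ (∫⁻ x, (C₀ * D * F) ^ p * G x ^ p) ^ (1 / p) := by
          gcongr with x
          rw [← ENNReal.mul_rpow_of_nonneg _ _ hp0.le]
          exact ENNReal.rpow_le_rpow (hx x) hp0.le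
      _ = (C₀ * D * F) * (∫⁻ x, G x ^ p) ^ (1 / p) := by
          rw [lintegral_const_mul _ (mG.pow_const p),
            ENNReal.mul_rpow_of_nonneg _ _ (by positivity), ← ENNReal.rpow_mul,
            mul_one_div_cancel hp0.ne', ENNReal.rpow_one]
      _ = _ := by ring
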